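/- For every fixed x ∈ ℝ and q ∈ (0,1], the fourth-order Taylor expansion of u ↦ f_x(u) at u = 0 is: f_x(u) = (1/2)(q−1)q(x²−1)u² − (1/6)(q−1)q(2q−1)x(x²−3)u³ + (1/24)q(−3 + 6x² − x⁴ − 12q²(2 − 4x² + x⁴) + 6q³(2 − 4x² + x⁴) + q(15 − 30x² + 7x⁴))u⁴ + r_x(u)u⁴, where r_x(u) → 0 as u → 0. In particular f_x(0) = 0 and f_x'(0) = 0. -/

import Mathlib

open MeasureTheory ProbabilityTheory Real Filter Topology

/-- The standard normal density `φ(t) = (2π)^{−1/2}·e^{−t²/2}`. -/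
noncomputable def stdphi (t : ℝ) : ℝ := (Real.sqrt (2 * π))⁻¹ * Real.exp (-t ^ 2 / 2)

/-- `f_x(u) = ln( φ(x) / ( q·φ(x − (1−q)u) + (1−q)·φ(x + qu) ) )`. -/
noncomputable def fX (q x u : ℝ) : ℝ :=
  Real.log (stdphi x / (q * stdphi (x - (1 - q) * u) + (1 - q) * stdphi (x + q * u)))

/-!
The likelihood ratio `φ(x - y) / φ(x) = exp (x y - y² / 2)` is the generating function of the
Hermite polynomials `Heₙ(x)`. Hence a mixture of shifts `φ(x - cᵢ u)` with weights `pᵢ` has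
likelihood ratio `∑ mₖ Heₖ(x) uᵏ / k!` against `φ(x)`, where `mₖ = ∑ pᵢ cᵢᵏ`. If `m₀ = 1` and
`m₁ = 0`, the ratio is `1 + O(u²)`, so to fourth order its logarithm only picks up the extra term
`-(m₂ He₂(x) / 2)² u⁴ / 2`. Here the weights are `q, 1 - q` and the shifts `1 - q, -q`, so the `mₖ`
are the central moments of a Bernoulli variable with parameter `q`.
-/

open Asymptotics Polynomial

lemma exists_tendsto_zero_eq_add_mul_of_isLittleO {α 𝕜 : Type*} [TopologicalSpace α]
    [NormedField 𝕜] {f p g : α → 𝕜} {a : α} (hfp : (fun u => f u - p u) =o[𝓝 a] g)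
    (hg : ∀ u, u ≠ a → g u ≠ 0) :
    ∃ r : α → 𝕜, Tendsto r (𝓝 a) (𝓝 0) ∧ ∀ u, f u = p u + r u * g u := by
  refine ⟨fun u => (f u - p u) / g u, hfp.tendsto_div_nhds_zero, fun u => ?_⟩
  have hcancel : (f u - p u) / g u * g u = f u - p u := by
    rcases eq_or_ne u a with rfl | hu
    · exact hfp.eventually_mul_div_cancel.self_of_nhds
    · exact div_mul_cancel₀ _ (hg u hu)
  rw [hcancel, add_sub_cancel]

lemma hasDerivAt_of_sub_isLittleO {𝕜 E : Type*} [NontriviallyNormedField 𝕜]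
    [NormedAddCommGroup E] [NormedSpace 𝕜 E] {f p : 𝕜 → E} {p' : E} {a : 𝕜}
    (hfp : (fun u => f u - p u) =o[𝓝 a] fun u => u - a) (hp : HasDerivAt p p' a) :
    HasDerivAt f p' a := by
  have hzero : f a - p a = 0 := hfp.isBigO.eq_zero_imp.self_of_nhds (sub_self a)
  have hdiff : HasDerivAt (fun u => f u - p u) 0 a := by
    simpa only [hasDerivAt_iff_isLittleO, hzero, smul_zero, sub_zero] using hfp
  simpa using hdiff.fun_add hp

lemma log_one_add_add_sum_range_isBigO (n : ℕ) :
    (fun w : ℝ => log (1 + w) + ∑ i ∈ Finset.range n, (-w) ^ (i + 1) / (i + 1))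
      =O[𝓝 0] fun w => w ^ (n + 1) := by
  refine IsBigO.of_bound 2 ?_
  filter_upwards [Metric.ball_mem_nhds (0 : ℝ) one_half_pos] with w hw
  have habs : |w| < 1 / 2 := by simpa using hw
  calc ‖log (1 + w) + ∑ i ∈ Finset.range n, (-w) ^ (i + 1) / (i + 1)‖
      ≤ |w| ^ (n + 1) / (1 - |w|) := by
        simpa only [abs_neg, sub_neg_eq_add, add_comm, norm_eq_abs] using
          abs_log_sub_add_sum_range_le (x := -w) (by rw [abs_neg]; linarith) n
    _ ≤ 2 * ‖w ^ (n + 1)‖ := by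
        rw [norm_pow, norm_eq_abs, div_le_iff₀ (by linarith)]
        nlinarith [pow_nonneg (abs_nonneg w) (n + 1)]

lemma log_sub_isLittleO_of_sub_isLittleO {g : ℝ → ℝ} {a b d : ℝ}
    (hg : (fun u => g u - (1 + a * u ^ 2 + b * u ^ 3 + d * u ^ 4)) =o[𝓝 0] fun u => u ^ 4) :
    (fun u => log (g u) - (a * u ^ 2 + b * u ^ 3 + (d - a ^ 2 / 2) * u ^ 4))
      =o[𝓝 0] fun u => u ^ 4 := by
  have hthree : (fun u : ℝ => u ^ 3) =o[𝓝 0] fun u => u ^ 2 := isLittleO_pow_pow (by norm_num)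
  have hfour : (fun u : ℝ => u ^ 4) =o[𝓝 0] fun u => u ^ 2 := isLittleO_pow_pow (by norm_num)
  have hlead : (fun u => g u - 1 - a * u ^ 2) =o[𝓝 0] fun u => u ^ 2 :=
    (((hg.trans hfour).add (hthree.const_mul_left b)).add (hfour.const_mul_left d)).congr_left
      fun u => by ring
  have hquad : (fun u : ℝ => a * u ^ 2) =O[𝓝 0] fun u => u ^ 2 :=
    (isBigO_refl _ _).const_mul_left a
  have hsub_one : (fun u => g u - 1) =O[𝓝 0] fun u => u ^ 2 :=
    (hlead.isBigO.add hquad).congr_left fun u => by ring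
  have hsq : (fun u => (g u - 1) ^ 2 - a ^ 2 * u ^ 4) =o[𝓝 0] fun u => u ^ 4 :=
    (hlead.mul_isBigO (hsub_one.add hquad)).congr (fun u => by ring) fun u => by ring
  have htendsto : Tendsto (fun u => g u - 1) (𝓝 0) (𝓝 0) :=
    hsub_one.trans_tendsto (by simpa using (continuous_pow 2).tendsto (0 : ℝ))
  have hlog : (fun u => log (g u) - ((g u - 1) - (g u - 1) ^ 2 / 2)) =o[𝓝 0] fun u => u ^ 4 := by
    have hcomp := ((log_one_add_add_sum_range_isBigO 2).comp_tendsto htendsto).trans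
      (hsub_one.pow 3)
    refine (hcomp.trans_isLittleO ?_).congr_left fun u => ?_
    · simpa only [← pow_mul] using isLittleO_pow_pow (𝕜 := ℝ) (by norm_num : 4 < 2 * 3)
    · simp only [Function.comp_apply, Finset.sum_range_succ, Finset.sum_range_zero,
        add_sub_cancel]
      push_cast
      ring
  exact ((hlog.add hg).sub (hsq.const_mul_left (1 / 2))).congr_left fun u => by ring

lemma aeval_hermite_two (x : ℝ) : aeval x (hermite 2) = x ^ 2 - 1 := by
  rw [hermite_succ, hermite_one, derivative_X, map_sub, map_mul, aeval_X, map_one, sq]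

lemma aeval_hermite_three (x : ℝ) : aeval x (hermite 3) = x ^ 3 - 3 * x := by
  simp only [hermite_succ 2, hermite_succ 1, hermite_one, derivative_mul, derivative_X,
    derivative_one, map_sub, map_add, map_mul, map_one, map_zero, aeval_X]
  ring

lemma aeval_hermite_four (x : ℝ) : aeval x (hermite 4) = x ^ 4 - 6 * x ^ 2 + 3 := by
  simp only [hermite_succ 3, hermite_succ 2, hermite_succ 1, hermite_one, derivative_mul,
    derivative_X, derivative_one, map_sub, map_add, map_mul, map_one, map_zero, aeval_X]
  ring

lemma iteratedDeriv_exp_mul_sub_sq_div_two (n : ℕ) (x y : ℝ) :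
    iteratedDeriv n (fun t => exp (x * t - t ^ 2 / 2)) y
      = aeval (x - y) (hermite n) * exp (x * y - y ^ 2 / 2) := by
  have hshift (t : ℝ) : exp (x * t - t ^ 2 / 2) = exp (x ^ 2 / 2) * exp (-((x - t) ^ 2 / 2)) := by
    rw [← exp_add]
    ring_nf
  have hgaussian : iteratedDeriv n (fun t => exp (-((x - t) ^ 2 / 2))) y
      = aeval (x - y) (hermite n) * exp (-((x - y) ^ 2 / 2)) := by
    rw [iteratedDeriv_comp_const_sub n (fun t => exp (-(t ^ 2 / 2)))]
    simp only [iteratedDeriv_eq_iterate, deriv_gaussian_eq_hermite_mul_gaussian, smul_eq_mul]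
    rw [← mul_assoc, ← mul_assoc, ← mul_pow, neg_one_mul, neg_neg, one_pow, one_mul]
  simp only [hshift]
  rw [iteratedDeriv_const_mul_field, hgaussian, mul_left_comm]

lemma exp_mul_sub_sq_div_two_sub_sum_hermite_isLittleO (n : ℕ) (x : ℝ) :
    (fun y => exp (x * y - y ^ 2 / 2)
      - ∑ k ∈ Finset.range (n + 1), aeval x (hermite k) / k.factorial * y ^ k)
      =o[𝓝 0] fun y => y ^ n := by
  have htaylor := taylor_isLittleO_univ (x₀ := 0) (n := n)
    (f := fun y => exp (x * y - y ^ 2 / 2)) (by fun_prop)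
  simp only [sub_zero] at htaylor
  refine htaylor.congr_left fun y => ?_
  simp only [taylor_within_apply, iteratedDerivWithin_univ, iteratedDeriv_exp_mul_sub_sq_div_two,
    sub_zero, smul_eq_mul]
  congr! 2 with k
  simp only [mul_zero, ne_eq, OfNat.ofNat_ne_zero, not_false_eq_true, zero_pow, zero_div, sub_self,
    exp_zero, mul_one]
  ring

lemma stdphi_pos (t : ℝ) : 0 < stdphi t := by
  unfold stdphi
  positivity

lemma stdphi_sub (x y : ℝ) : stdphi (x - y) = stdphi x * exp (x * y - y ^ 2 / 2) := by
  rw [stdphi, stdphi, mul_assoc, ← exp_add]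
  ring_nf

section Mixture

variable {ι : Type*} [Fintype ι]

/-- The `k`-th moment of the discrete signed measure with mass `p i` at `c i`. -/
def weightedMoment (p c : ι → ℝ) (k : ℕ) : ℝ := ∑ i, p i * c i ^ k

/-- The likelihood ratio at `x` of the mixture with weights `p i` of the normal laws with means
`c i * u` and unit variance, against the standard normal law. The weights may be any reals. -/
noncomputable def mixtureRatio (p c : ι → ℝ) (x u : ℝ) : ℝ :=
  (∑ i, p i * stdphi (x - c i * u)) / stdphi x

lemma mixtureRatio_eq_sum_exp (p c : ι → ℝ) (x u : ℝ) :
    mixtureRatio p c x u = ∑ i, p i * exp (x * (c i * u) - (c i * u) ^ 2 / 2) := by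
  simp only [mixtureRatio, stdphi_sub, mul_left_comm (p _), ← Finset.mul_sum]
  exact mul_div_cancel_left₀ _ (stdphi_pos x).ne'

lemma mixtureRatio_sub_sum_hermite_isLittleO (p c : ι → ℝ) (n : ℕ) (x : ℝ) :
    (fun u => mixtureRatio p c x u - ∑ k ∈ Finset.range (n + 1),
      weightedMoment p c k * aeval x (hermite k) / k.factorial * u ^ k)
      =o[𝓝 0] fun u => u ^ n := by
  have hterm (i : ι) : (fun u => p i * (exp (x * (c i * u) - (c i * u) ^ 2 / 2)
      - ∑ k ∈ Finset.range (n + 1), aeval x (hermite k) / k.factorial * (c i * u) ^ k))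
      =o[𝓝 0] fun u => u ^ n := by
    have hscale : Tendsto (fun u => c i * u) (𝓝 0) (𝓝 0) := by
      simpa using (continuous_const_mul (c i)).tendsto 0
    have hpow : (fun u => (c i * u) ^ n) =O[𝓝 0] fun u => u ^ n :=
      ((isBigO_refl _ _).const_mul_left (c i)).pow n
    exact (((exp_mul_sub_sq_div_two_sub_sum_hermite_isLittleO n x).comp_tendsto
      hscale).trans_isBigO hpow).const_mul_left (p i)
  refine (IsLittleO.fun_sum fun i (_ : i ∈ Finset.univ) => hterm i).congr_left fun u => ?_
  simp only [mul_sub, Finset.sum_sub_distrib, mixtureRatio_eq_sum_exp, weightedMoment,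
    Finset.mul_sum, Finset.sum_mul, Finset.sum_div]
  rw [Finset.sum_comm]
  congr! 3
  ring

lemma log_mixtureRatio_sub_isLittleO {p c : ι → ℝ} (hmass : weightedMoment p c 0 = 1)
    (hmean : weightedMoment p c 1 = 0) (x : ℝ) :
    (fun u => log (mixtureRatio p c x u) -
      (weightedMoment p c 2 * aeval x (hermite 2) / 2 * u ^ 2
        + weightedMoment p c 3 * aeval x (hermite 3) / 6 * u ^ 3
        + (weightedMoment p c 4 * aeval x (hermite 4) / 24
          - (weightedMoment p c 2 * aeval x (hermite 2) / 2) ^ 2 / 2) * u ^ 4))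
      =o[𝓝 0] fun u => u ^ 4 := by
  refine log_sub_isLittleO_of_sub_isLittleO
    ((mixtureRatio_sub_sum_hermite_isLittleO p c 4 x).congr_left fun u => ?_)
  simp [Finset.sum_range_succ, hmass, hmean, Nat.factorial]

end Mixture

lemma fX_eq_neg_log_mixtureRatio (q x u : ℝ) :
    fX q x u = -log (mixtureRatio ![q, 1 - q] ![1 - q, -q] x u) := by
  have hadd : x - -q * u = x + q * u := by ring
  rw [fX, mixtureRatio, ← log_inv, inv_div]
  simp only [Fin.sum_univ_two, Matrix.cons_val_zero, Matrix.cons_val_one, hadd]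

lemma fX_sub_hermite_isLittleO (q x : ℝ) :
    (fun u => fX q x u -
      -(q * (1 - q) * aeval x (hermite 2) / 2 * u ^ 2
        + q * (1 - q) * (1 - 2 * q) * aeval x (hermite 3) / 6 * u ^ 3
        + (q * (1 - q) * (1 - 3 * q + 3 * q ^ 2) * aeval x (hermite 4) / 24
          - (q * (1 - q) * aeval x (hermite 2) / 2) ^ 2 / 2) * u ^ 4))
      =o[𝓝 0] fun u => u ^ 4 := by
  have hmoment (k : ℕ) : weightedMoment ![q, 1 - q] ![1 - q, -q] k
      = q * (1 - q) ^ k + (1 - q) * (-q) ^ k := by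
    simp [weightedMoment, Fin.sum_univ_two]
  have hmass : weightedMoment ![q, 1 - q] ![1 - q, -q] 0 = 1 := by rw [hmoment]; ring
  have hmean : weightedMoment ![q, 1 - q] ![1 - q, -q] 1 = 0 := by rw [hmoment]; ring
  refine (log_mixtureRatio_sub_isLittleO hmass hmean x).neg_left.congr_left fun u => ?_
  simp only [fX_eq_neg_log_mixtureRatio, hmoment]
  ring

theorem fX_taylor_fourth_order_general (q x : ℝ) :
    (∃ r : ℝ → ℝ, Tendsto r (𝓝 0) (𝓝 0) ∧ ∀ u : ℝ,
      fX q x u =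
        (1 / 2) * (q - 1) * q * (x ^ 2 - 1) * u ^ 2
        - (1 / 6) * (q - 1) * q * (2 * q - 1) * x * (x ^ 2 - 3) * u ^ 3
        + (1 / 24) * q *
            (-3 + 6 * x ^ 2 - x ^ 4 - 12 * q ^ 2 * (2 - 4 * x ^ 2 + x ^ 4)
              + 6 * q ^ 3 * (2 - 4 * x ^ 2 + x ^ 4) + q * (15 - 30 * x ^ 2 + 7 * x ^ 4)) * u ^ 4
        + r u * u ^ 4) ∧
    fX q x 0 = 0 ∧ deriv (fX q x) 0 = 0 := by
  obtain ⟨r, hr, hfr⟩ := exists_tendsto_zero_eq_add_mul_of_isLittleO (fX_sub_hermite_isLittleO q x)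
    fun u hu => pow_ne_zero 4 hu
  refine ⟨⟨r, hr, fun u => ?_⟩, by simp [hfr 0], ?_⟩
  · rw [hfr u, aeval_hermite_two, aeval_hermite_three, aeval_hermite_four]
    ring
  · have hlin : (fun u : ℝ => u ^ 4) =o[𝓝 0] fun u => u - 0 := by
      simpa only [sub_zero] using isLittleO_pow_id (by norm_num : 1 < 4)
    refine (hasDerivAt_of_sub_isLittleO ((fX_sub_hermite_isLittleO q x).trans hlin) ?_).deriv
    convert! ((((hasDerivAt_pow 2 (0 : ℝ)).const_mul _).fun_add
      ((hasDerivAt_pow 3 (0 : ℝ)).const_mul _)).fun_add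
      ((hasDerivAt_pow 4 (0 : ℝ)).const_mul _)).fun_neg using 1
    simp

/-- The fourth-order Taylor expansion of `u ↦ f_x(u)` at `u = 0`, with Peano remainder
`r_x(u)·u⁴` where `r_x(u) → 0` as `u → 0`; in particular `f_x(0) = 0` and `f_x'(0) = 0`. -/
theorem fX_taylor_fourth_order (q : ℝ) (hq : q ∈ Set.Ioc (0 : ℝ) 1) (x : ℝ) :
    (∃ r : ℝ → ℝ, Tendsto r (𝓝 0) (𝓝 0) ∧ ∀ u : ℝ,
      fX q x u =
        (1 / 2) * (q - 1) * q * (x ^ 2 - 1) * u ^ 2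
        - (1 / 6) * (q - 1) * q * (2 * q - 1) * x * (x ^ 2 - 3) * u ^ 3
        + (1 / 24) * q *
            (-3 + 6 * x ^ 2 - x ^ 4 - 12 * q ^ 2 * (2 - 4 * x ^ 2 + x ^ 4)
              + 6 * q ^ 3 * (2 - 4 * x ^ 2 + x ^ 4) + q * (15 - 30 * x ^ 2 + 7 * x ^ 4)) * u ^ 4
        + r u * u ^ 4) ∧
    fX q x 0 = 0 ∧ deriv (fX q x) 0 = 0 :=
  fX_taylor_fourth_order_general q x
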